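/- arXiv:2602.04623 — 8 statements merged into one kernel-verified Lean document; each statement's English description precedes it below -/
import Mathlib

section
/- Let M and N be positive integers and let H be an M-by-N complex matrix. The function that maps (z, β) ∈ ℝ^N × ℝ to log det(e^β I_M + H diag(e^{z_1}, …, e^{z_N}) H^*) is convex on ℝ^{N+1}. (Here the matrix e^β I_M + H diag(e^{z}) H^* is Hermitian positive definite, so its determinant is a positive real number and the logarithm is well defined.) -/
open Matrix

/-- A positive-coefficient sum of exponentials is log-convex. -/
lemma lse_aux {ι : Type*} [Fintype ι] (c u v : ι → ℝ) (hc : ∀ i, 0 ≤ c i)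
    (i₀ : ι) (h0 : 0 < c i₀) (a b : ℝ) (ha : 0 ≤ a) (hb : 0 ≤ b) (hab : a + b = 1) :
    Real.log (∑ i, c i * Real.exp (a * u i + b * v i)) ≤
      a * Real.log (∑ i, c i * Real.exp (u i)) + b * Real.log (∑ i, c i * Real.exp (v i)) := by
  have pos : ∀ w : ι → ℝ, 0 < ∑ i, c i * Real.exp (w i) := fun w =>
    Finset.sum_pos' (fun i _ => mul_nonneg (hc i) (Real.exp_pos _).le)
      ⟨i₀, Finset.mem_univ _, mul_pos h0 (Real.exp_pos _)⟩
  set X := ∑ i, c i * Real.exp (u i) with hX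
  set Y := ∑ i, c i * Real.exp (v i) with hY
  have pX : 0 < X := pos u
  have pY : 0 < Y := pos v
  rw [Real.log_le_iff_le_exp (pos _)]
  have key : ∀ i, c i * Real.exp (a * u i + b * v i) ≤
      Real.exp (a * Real.log X + b * Real.log Y) *
        (a * (c i * Real.exp (u i)) / X + b * (c i * Real.exp (v i)) / Y) := by
    intro i
    have h := convexOn_exp.2 (Set.mem_univ (u i - Real.log X)) (Set.mem_univ (v i - Real.log Y))
      ha hb hab
    simp only [smul_eq_mul, Real.exp_sub, Real.exp_log pX, Real.exp_log pY] at h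
    have e : Real.exp (a * u i + b * v i) = Real.exp (a * Real.log X + b * Real.log Y) *
        Real.exp (a * (u i - Real.log X) + b * (v i - Real.log Y)) := by
      rw [← Real.exp_add]; congr 1; ring
    rw [e]
    calc _ = Real.exp (a * Real.log X + b * Real.log Y) * (c i *
        Real.exp (a * (u i - Real.log X) + b * (v i - Real.log Y))) := by ring
      _ ≤ Real.exp (a * Real.log X + b * Real.log Y) * (c i *
        (a * (Real.exp (u i) / X) + b * (Real.exp (v i) / Y))) := by
          have := hc i
          gcongr
      _ = _ := by ring
  refine (Finset.sum_le_sum fun i _ => key i).trans ?_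
  rw [← Finset.mul_sum, Finset.sum_add_distrib, ← Finset.sum_div, ← Finset.sum_div,
    ← Finset.mul_sum, ← Finset.mul_sum, ← hX, ← hY, mul_div_assoc, mul_div_assoc,
    div_self pX.ne', div_self pY.ne', mul_one, mul_one, hab, mul_one]

/-- Row expansion of the determinant of a product. -/
lemma det_mul_rows {m k : Type*} [Fintype m] [DecidableEq m] [Fintype k] [DecidableEq k]
    (A : Matrix m k ℂ) (B : Matrix k m ℂ) :
    (A * B).det = ∑ f : m → k, (∏ i, A i (f i)) * (B.submatrix f id).det := by
  have h : (A * B) = fun i => ∑ j, A i j • B j := by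
    ext i l
    simp [Matrix.mul_apply, Finset.sum_apply]
  have h2 := (detRowAlternating (n := m) (R := ℂ)).toMultilinearMap.map_sum
    (fun i j => A i j • B j)
  change (detRowAlternating (n := m) (R := ℂ)).toMultilinearMap (A * B) = _
  rw [h]
  refine h2.trans (Finset.sum_congr rfl fun f _ => ?_)
  exact (detRowAlternating (n := m) (R := ℂ)).toMultilinearMap.map_smul_univ
    (fun i => A i (f i)) (fun i => B (f i))

/-- Cauchy-Binet, summed over all functions. -/
lemma cauchy_binet_fun {m k : Type*} [Fintype m] [DecidableEq m] [Fintype k] [DecidableEq k]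
    (A : Matrix m k ℂ) (B : Matrix k m ℂ) :
    (Fintype.card (Equiv.Perm m) : ℂ) * (A * B).det =
      ∑ f : m → k, (A.submatrix id f).det * (B.submatrix f id).det := by
  have h : ∀ σ : Equiv.Perm m, (A * B).det = ∑ f : m → k,
      ((Equiv.Perm.sign σ : ℤ) : ℂ) * (∏ i, A i (f (σ i))) * (B.submatrix f id).det := by
    intro σ
    rw [det_mul_rows, ← (Equiv.arrowCongr σ.symm (Equiv.refl k)).sum_comp]
    refine Finset.sum_congr rfl fun f _ => ?_
    have := Matrix.det_permute σ (B.submatrix f id)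
    have e : (B.submatrix ((Equiv.arrowCongr σ.symm (Equiv.refl k)) f) id) =
      (B.submatrix f id).submatrix σ id := by
      ext i j; simp
    rw [e, this]
    simp
    ring
  have h2 : ∑ σ : Equiv.Perm m, (A * B).det = (Fintype.card (Equiv.Perm m) : ℂ) * (A * B).det := by
    rw [Finset.sum_const, nsmul_eq_mul, Finset.card_univ]
  rw [← h2, Finset.sum_congr rfl fun σ _ => h σ, Finset.sum_comm]
  refine Finset.sum_congr rfl fun f _ => ?_
  rw [← Finset.sum_mul, ← Matrix.det_transpose (A.submatrix id f),
    Matrix.det_apply' (A.submatrix id f)ᵀ]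
  rfl

lemma det_expand {m k : Type*} [Fintype m] [DecidableEq m] [Fintype k] [DecidableEq k]
    (G : Matrix m k ℂ) (d : k → ℝ) :
    (G * Matrix.diagonal (fun j => (Real.exp (d j) : ℂ)) * Gᴴ).det.re =
      ∑ f : m → k, (Complex.normSq (G.submatrix id f).det / Fintype.card (Equiv.Perm m)) *
        Real.exp (∑ i, d (f i)) := by
  have hc : (Fintype.card (Equiv.Perm m) : ℝ) ≠ 0 := by
    exact_mod_cast Fintype.card_ne_zero
  have h := cauchy_binet_fun (G * Matrix.diagonal (fun j => (Real.exp (d j) : ℂ))) Gᴴ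
  have t : ∀ f : m → k,
      ((G * Matrix.diagonal (fun j => (Real.exp (d j) : ℂ))).submatrix id f).det *
        (Gᴴ.submatrix f id).det =
      ((Complex.normSq (G.submatrix id f).det * Real.exp (∑ i, d (f i)) : ℝ) : ℂ) := by
    intro f
    have e1 : (G * Matrix.diagonal (fun j => (Real.exp (d j) : ℂ))).submatrix id f =
        G.submatrix id f * Matrix.diagonal (fun i => (Real.exp (d (f i)) : ℂ)) := by
      ext i j; simp [Matrix.mul_diagonal]
    have e2 : Gᴴ.submatrix f id = (G.submatrix id f)ᴴ := by
      ext i j; simp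
    rw [e1, e2, Matrix.det_mul, Matrix.det_conjTranspose, Matrix.det_diagonal, Real.exp_sum]
    push_cast
    rw [← Complex.mul_conj]
    simp only [Complex.star_def]
    ring
  simp_rw [t] at h
  have h' := congrArg Complex.re h
  rw [← Complex.ofReal_sum, Complex.ofReal_re, ← Complex.ofReal_natCast,
    Complex.re_ofReal_mul] at h'
  rw [← mul_right_inj' hc, h', Finset.mul_sum]
  refine Finset.sum_congr rfl fun f _ => ?_
  field_simp

/-- **Proposition 1.** For an `M × N` complex matrix `H`, the function
`(z, β) ↦ log det(e^β I + H diag(e^z) Hᴴ)` is convex on `ℝ^N × ℝ`.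
The determinant of the Hermitian positive definite matrix is a positive real,
recovered via its real part. -/
theorem dolTV_logdet_convex (M N : ℕ) (hM : 0 < M) (hN : 0 < N)
    (H : Matrix (Fin M) (Fin N) ℂ) :
    ConvexOn ℝ Set.univ (fun p : (Fin N → ℝ) × ℝ =>
      Real.log (((Real.exp p.2 : ℂ) • (1 : Matrix (Fin M) (Fin M) ℂ) +
        H * Matrix.diagonal (fun n => (Real.exp (p.1 n) : ℂ)) * Hᴴ).det.re)) := by
  let G : Matrix (Fin M) (Fin M ⊕ Fin N) ℂ := Matrix.fromCols 1 H
  let d : (Fin N → ℝ) × ℝ → Fin M ⊕ Fin N → ℝ := fun p => Sum.elim (fun _ => p.2) p.1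
  have key : ∀ p : (Fin N → ℝ) × ℝ, ((Real.exp p.2 : ℂ) • (1 : Matrix (Fin M) (Fin M) ℂ) +
        H * Matrix.diagonal (fun n => (Real.exp (p.1 n) : ℂ)) * Hᴴ) =
      G * Matrix.diagonal (fun j => (Real.exp (d p j) : ℂ)) * Gᴴ := by
    intro p
    ext i j
    rw [Matrix.mul_apply, Fintype.sum_sum_type, Matrix.add_apply, Matrix.mul_apply]
    simp only [Matrix.mul_diagonal]
    congr 1
    simp [G, d, Matrix.one_apply, eq_comm]
  simp_rw [key, det_expand]
  refine ⟨convex_univ, fun x _ y _ a b ha hb hab => ?_⟩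
  have hl : ∀ f : Fin M → Fin M ⊕ Fin N, ∑ i, d (a • x + b • y) (f i) =
      a * ∑ i, d x (f i) + b * ∑ i, d y (f i) := by
    intro f
    rw [Finset.mul_sum, Finset.mul_sum, ← Finset.sum_add_distrib]
    refine Finset.sum_congr rfl fun i _ => ?_
    rcases f i with j | j <;> simp [d]
  simp only [hl, smul_eq_mul]
  refine lse_aux _ _ _ (fun f => div_nonneg (Complex.normSq_nonneg _) (Nat.cast_nonneg _))
    Sum.inl ?_ a b ha hb hab
  have e : G.submatrix id Sum.inl = 1 := by
    ext i j; simp [G]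
  rw [e, Matrix.det_one, map_one]
  have : 0 < Fintype.card (Equiv.Perm (Fin M)) := Fintype.card_pos
  positivity
end

section
/- Let M and I be positive integers and let h_1, …, h_I ∈ ℂ^M be vectors whose complex linear span is all of ℂ^M. Then the function z ∈ ℝ^I ↦ log det(∑_{i=1}^I e^{z_i} h_i h_i^*) is convex on ℝ^I. (The matrix ∑_{i=1}^I e^{z_i} h_i h_i^* is Hermitian positive definite since the h_i span ℂ^M and all weights e^{z_i} are positive, so its determinant is a positive real number.) -/
open Matrix

lemma aux_logsumexp {P : Type*} [Fintype P] {N : ℕ} (c : P → ℝ) (hc : ∀ p, 0 ≤ c p)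
    (l : P → (Fin N → ℝ) →ₗ[ℝ] ℝ) :
    ConvexOn ℝ Set.univ (fun z : Fin N → ℝ => Real.log (∑ p, c p * Real.exp (l p z))) := by
  by_cases h0 : ∀ p, c p = 0
  · simp only [h0, zero_mul, Finset.sum_const_zero, Real.log_zero]
    exact convexOn_const 0 convex_univ
  push Not at h0
  obtain ⟨p0, hp0⟩ := h0
  have hpos : ∀ z : Fin N → ℝ, 0 < ∑ p, c p * Real.exp (l p z) := fun z =>
    Finset.sum_pos' (fun p _ => mul_nonneg (hc p) (Real.exp_pos _).le)
      ⟨p0, Finset.mem_univ _, mul_pos (lt_of_le_of_ne (hc p0) (Ne.symm hp0)) (Real.exp_pos _)⟩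
  refine ⟨convex_univ, ?_⟩
  intro x _ y _ a b ha hb hab
  simp only [smul_eq_mul]
  set X := ∑ p, c p * Real.exp (l p x) with hX
  set Y := ∑ p, c p * Real.exp (l p y) with hY
  have hXp : 0 < X := hpos x
  have hYp : 0 < Y := hpos y
  rw [Real.log_le_iff_le_exp (hpos _)]
  set L := a * Real.log X + b * Real.log Y with hL
  have key : ∀ p, c p * Real.exp (l p (a • x + b • y)) ≤
      Real.exp L * (a * (c p * Real.exp (l p x) / X) + b * (c p * Real.exp (l p y) / Y)) := by
    intro p
    have e := convexOn_exp.2 (Set.mem_univ (l p x - Real.log X))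
      (Set.mem_univ (l p y - Real.log Y)) ha hb hab
    simp only [smul_eq_mul, Real.exp_sub, Real.exp_log hXp, Real.exp_log hYp] at e
    have e2 : Real.exp (l p (a • x + b • y)) = Real.exp L *
        Real.exp (a * (l p x - Real.log X) + b * (l p y - Real.log Y)) := by
      rw [← Real.exp_add]
      congr 1
      simp only [map_add, map_smul, smul_eq_mul, hL]
      ring
    rw [e2]
    have := mul_le_mul_of_nonneg_left e (mul_nonneg (hc p) (Real.exp_pos L).le)
    calc _ = c p * Real.exp L *
        Real.exp (a * (l p x - Real.log X) + b * (l p y - Real.log Y)) := by ring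
      _ ≤ _ := this
      _ = _ := by ring
  refine (Finset.sum_le_sum fun p _ => key p).trans ?_
  rw [← Finset.mul_sum, Finset.sum_add_distrib, ← Finset.mul_sum, ← Finset.mul_sum,
    ← Finset.sum_div, ← Finset.sum_div, ← hX, ← hY, div_self hXp.ne', div_self hYp.ne']
  simp [hab]

lemma aux_det {M N : ℕ} (w : Fin N → ℂ) (h g : Fin N → Fin M → ℂ) :
    (∑ i, w i • Matrix.vecMulVec (h i) (g i)).det =
      ∑ p : Fin M → Fin N, (∏ m, w (p m)) * (∏ m, h (p m) m) *
        (Matrix.of fun m => g (p m)).det := by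
  have h1 : (∑ i, w i • Matrix.vecMulVec (h i) (g i)) =
      fun m => ∑ i, (w i * h i m) • g i := by
    ext m k
    simp [Matrix.sum_apply, Matrix.vecMulVec_apply, mul_assoc]
  rw [h1]
  have h2 := (Matrix.detRowAlternating (n := Fin M) (R := ℂ)).toMultilinearMap.map_sum
    (fun m (i : Fin N) => (w i * h i m) • g i)
  refine h2.trans (Finset.sum_congr rfl fun p _ => ?_)
  rw [MultilinearMap.map_smul_univ, Finset.prod_mul_distrib, smul_eq_mul]
  rfl

lemma aux_binet {M N : ℕ} (w : Fin N → ℂ) (h g : Fin N → Fin M → ℂ) :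
    (M.factorial : ℂ) * (∑ i, w i • Matrix.vecMulVec (h i) (g i)).det =
      ∑ p : Fin M → Fin N, (∏ m, w (p m)) * (Matrix.of fun m => h (p m)).det *
        (Matrix.of fun m => g (p m)).det := by
  have hs : ∀ σ : Equiv.Perm (Fin M), (∑ i, w i • Matrix.vecMulVec (h i) (g i)).det =
      ∑ p : Fin M → Fin N, (∏ m, w (p m)) * ((Equiv.Perm.sign σ : ℤ) * ∏ m, h (p (σ m)) m) *
        (Matrix.of fun m => g (p m)).det := by
    intro σ
    rw [aux_det, ← (Equiv.arrowCongr σ (Equiv.refl (Fin N))).symm.sum_comp]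
    refine Finset.sum_congr rfl fun p _ => ?_
    have e1 : ∏ m, w (p (σ m)) = ∏ m, w (p m) := Equiv.prod_comp σ fun m => w (p m)
    have e2 : (Matrix.of fun m => g (p (σ m))).det =
        (Equiv.Perm.sign σ : ℤ) * (Matrix.of fun m => g (p m)).det :=
      Matrix.det_permute σ (Matrix.of fun m => g (p m))
    have e3 : ∀ m, (Equiv.arrowCongr σ (Equiv.refl (Fin N))).symm p m = p (σ m) := fun m => rfl
    simp only [e3, e1, e2]
    ring
  have hc : (M.factorial : ℂ) * (∑ i, w i • Matrix.vecMulVec (h i) (g i)).det =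
      ∑ σ : Equiv.Perm (Fin M), (∑ i, w i • Matrix.vecMulVec (h i) (g i)).det := by
    simp [Finset.sum_const, Finset.card_univ, Fintype.card_perm]
  rw [hc, Finset.sum_congr rfl fun σ _ => hs σ, Finset.sum_comm]
  refine Finset.sum_congr rfl fun p _ => ?_
  rw [← Finset.sum_mul, ← Finset.mul_sum, Matrix.det_apply' (Matrix.of fun m => h (p m))]
  rfl

/-- **Lemma 1.** If `h₁, …, h_I ∈ ℂ^M` span `ℂ^M`, then
`z ↦ log det(∑ i, e^{z i} • h i (h i)ᴴ)` is convex on `ℝ^I`.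
The matrix `∑ i, e^{z i} h_i h_iᴴ` is Hermitian positive definite, so its
determinant is a positive real, recovered via its real part. -/
theorem logdet_sum_exp_rankOne_convex (M I : ℕ) (hM : 0 < M) (hI : 0 < I)
    (h : Fin I → Fin M → ℂ)
    (hspan : Submodule.span ℂ (Set.range h) = ⊤) :
    ConvexOn ℝ Set.univ (fun z : Fin I → ℝ =>
      Real.log ((∑ i, (Real.exp (z i) : ℂ) •
        Matrix.vecMulVec (h i) (fun m => star (h i m))).det.re)) := by
  have hf : (M.factorial : ℝ) ≠ 0 := by positivity
  have key := aux_logsumexp (P := Fin M → Fin I)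
    (fun p => (M.factorial : ℝ)⁻¹ * Complex.normSq (Matrix.of fun m => h (p m)).det)
    (fun p => mul_nonneg (by positivity) (Complex.normSq_nonneg _))
    (fun p => ∑ m, LinearMap.proj (p m))
  convert key using 3 with z
  have hb := aux_binet (fun i => (Real.exp (z i) : ℂ)) h (fun i m => star (h i m))
  have hd : ∀ p : Fin M → Fin I, (Matrix.of fun m => (fun k => star (h (p m) k))).det =
      star (Matrix.of fun m => h (p m)).det := by
    intro p
    rw [← Matrix.det_conjTranspose, ← Matrix.det_transpose]
    rfl
  have hr : (M.factorial : ℂ) * (∑ i, (Real.exp (z i) : ℂ) •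
        Matrix.vecMulVec (h i) (fun m => star (h i m))).det =
      ((∑ p : Fin M → Fin I, Real.exp (∑ m, z (p m)) *
        Complex.normSq (Matrix.of fun m => h (p m)).det : ℝ) : ℂ) := by
    rw [hb]
    push_cast
    refine Finset.sum_congr rfl fun p _ => ?_
    rw [hd, mul_assoc, Complex.star_def, Complex.mul_conj, Complex.exp_sum]
  have hre := congrArg Complex.re hr
  rw [Complex.ofReal_re, ← Complex.ofReal_natCast, Complex.re_ofReal_mul] at hre
  rw [eq_comm, ← mul_right_inj' hf, hre, Finset.mul_sum]
  refine Finset.sum_congr rfl fun p _ => ?_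
  simp only [LinearMap.sum_apply, LinearMap.proj_apply]
  field_simp
end

section
/- Let K and I be positive integers and let p_1, …, p_I, q_1, …, q_I ∈ ℝ^K be real vectors such that the family {p_i, q_i}_{i=1}^I spans ℝ^K. Then the function z ∈ ℝ^I ↦ log det(∑_{i=1}^I e^{z_i} (p_i p_i^T + q_i q_i^T)) is convex on ℝ^I. (The matrix ∑_{i=1}^I e^{z_i}(p_i p_i^T + q_i q_i^T) is real symmetric positive definite since the family spans ℝ^K and all weights e^{z_i} are positive.) -/
open Matrix

theorem det_expand_aux {n J : Type*} [Fintype n] [DecidableEq n] [Fintype J]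
    (w : J → ℝ) (v : J → n → ℝ) :
    (∑ j, w j • Matrix.vecMulVec (v j) (v j)).det =
      ∑ f : n → J, (∏ a, w (f a) * v (f a) a) * (Matrix.of fun a => v (f a)).det := by
  classical
  have h : (∑ j, w j • Matrix.vecMulVec (v j) (v j)) =
      fun a => ∑ j, (w j * v j a) • v j := by
    ext a b
    simp [Matrix.sum_apply, Matrix.vecMulVec_apply, mul_assoc]
  rw [h]
  have h2 := (Matrix.detRowAlternating (R := ℝ) (n := n)).toMultilinearMap.map_sum
    (fun a (j : J) => (w j * v j a) • v j)
  refine h2.trans (Finset.sum_congr rfl fun f _ => ?_)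
  exact (Matrix.detRowAlternating (R := ℝ) (n := n)).toMultilinearMap.map_smul_univ
    (fun a => w (f a) * v (f a) a) (fun a => v (f a))

theorem det_expand_s6 {n J : Type*} [Fintype n] [DecidableEq n] [Fintype J]
    (w : J → ℝ) (v : J → n → ℝ) :
    (Fintype.card (Equiv.Perm n) : ℝ) * (∑ j, w j • Matrix.vecMulVec (v j) (v j)).det =
      ∑ f : n → J, (∏ a, w (f a)) * (Matrix.of fun a => v (f a)).det ^ 2 := by
  classical
  have key : ∀ σ : Equiv.Perm n, (∑ j, w j • Matrix.vecMulVec (v j) (v j)).det =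
      ∑ f : n → J, (∏ a, w (f a)) * ((Equiv.Perm.sign σ : ℤ) * ∏ a, v (f (σ a)) a) *
        (Matrix.of fun a => v (f a)).det := by
    intro σ
    rw [det_expand_aux, ← Equiv.sum_comp (Equiv.arrowCongr σ.symm (Equiv.refl J))]
    refine Finset.sum_congr rfl fun f _ => ?_
    have h1 : (Equiv.arrowCongr σ.symm (Equiv.refl J)) f = fun a => f (σ a) := by
      ext a; simp
    rw [h1]
    have h2 : (Matrix.of fun a => v (f (σ a))).det =
        (Equiv.Perm.sign σ : ℤ) * (Matrix.of fun a => v (f a)).det :=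
      Matrix.det_permute σ (Matrix.of fun a => v (f a))
    have h3 : ∏ a, w (f (σ a)) = ∏ a, w (f a) := Equiv.prod_comp σ (fun a => w (f a))
    simp only [h2, Finset.prod_mul_distrib, h3]
    ring
  have : (Fintype.card (Equiv.Perm n) : ℝ) * (∑ j, w j • Matrix.vecMulVec (v j) (v j)).det =
      ∑ σ : Equiv.Perm n, (∑ j, w j • Matrix.vecMulVec (v j) (v j)).det := by
    simp
  rw [this, Finset.sum_congr rfl fun σ _ => key σ, Finset.sum_comm]
  refine Finset.sum_congr rfl fun f _ => ?_
  rw [← Finset.sum_mul, ← Finset.mul_sum, sq, ← mul_assoc]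
  congr 2
  rw [Matrix.det_apply']
  rfl

theorem log_sum_exp_convex {ι S : Type*} [Fintype S] (c : S → ℝ) (hc : ∀ s, 0 ≤ c s)
    (l : S → (ι → ℝ) →ₗ[ℝ] ℝ) (hpos : ∀ z, 0 < ∑ s, c s * Real.exp (l s z)) :
    ConvexOn ℝ Set.univ (fun z => Real.log (∑ s, c s * Real.exp (l s z))) := by
  refine ⟨convex_univ, fun x _ y _ a b ha hb hab => ?_⟩
  simp only [smul_eq_mul]
  set F : (ι → ℝ) → ℝ := fun z => ∑ s, c s * Real.exp (l s z) with hF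
  change Real.log (F (a • x + b • y)) ≤ a * Real.log (F x) + b * Real.log (F y)
  have hn : ∀ z, ∑ s, c s * Real.exp (l s z - Real.log (F z)) = 1 := by
    intro z
    have : ∀ s, c s * Real.exp (l s z - Real.log (F z)) = c s * Real.exp (l s z) / F z := by
      intro s
      rw [Real.exp_sub, Real.exp_log (hpos z), mul_div_assoc]
    rw [Finset.sum_congr rfl fun s _ => this s, ← Finset.sum_div]
    exact div_self (hpos z).ne'
  rw [Real.log_le_iff_le_exp (hpos _)]
  set L := a * Real.log (F x) + b * Real.log (F y) with hL
  have h1 : F (a • x + b • y) * Real.exp (-L) ≤ 1 := by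
    calc F (a • x + b • y) * Real.exp (-L)
        = ∑ s, c s * Real.exp (a * (l s x - Real.log (F x)) + b * (l s y - Real.log (F y))) := by
          rw [hF]
          simp only [Finset.sum_mul, mul_assoc, ← Real.exp_add]
          refine Finset.sum_congr rfl fun s _ => ?_
          congr 2
          simp only [map_add, map_smul, smul_eq_mul, hL, hF]
          ring
      _ ≤ ∑ s, c s * (a * Real.exp (l s x - Real.log (F x))
            + b * Real.exp (l s y - Real.log (F y))) := by
          refine Finset.sum_le_sum fun s _ => mul_le_mul_of_nonneg_left ?_ (hc s)
          exact convexOn_exp.2 (Set.mem_univ _) (Set.mem_univ _) ha hb hab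
      _ = a * ∑ s, c s * Real.exp (l s x - Real.log (F x))
            + b * ∑ s, c s * Real.exp (l s y - Real.log (F y)) := by
          rw [Finset.mul_sum, Finset.mul_sum, ← Finset.sum_add_distrib]
          exact Finset.sum_congr rfl fun s _ => by ring
      _ = 1 := by rw [hn, hn]; linarith
  rw [Real.exp_neg, ← div_eq_mul_inv, div_le_one (Real.exp_pos _)] at h1
  exact h1

theorem det_pos_aux {n J : Type*} [Fintype n] [DecidableEq n] [Fintype J]
    (w : J → ℝ) (hw : ∀ j, 0 < w j) (v : J → n → ℝ)
    (hspan : Submodule.span ℝ (Set.range v) = ⊤) :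
    0 < (∑ j, w j • Matrix.vecMulVec (v j) (v j)).det := by
  apply Matrix.PosDef.det_pos
  refine Matrix.PosDef.of_dotProduct_mulVec_pos ?_ ?_
  · ext a b
    simp [Matrix.sum_apply, Matrix.vecMulVec_apply, mul_comm]
  · intro x hx
    have h : star x ⬝ᵥ ((∑ j, w j • Matrix.vecMulVec (v j) (v j)) *ᵥ x)
        = ∑ j, w j * (v j ⬝ᵥ x) ^ 2 := by
      simp only [Matrix.sum_mulVec, dotProduct_sum, Matrix.smul_mulVec, dotProduct_smul,
        Matrix.vecMulVec_mulVec, star_trivial]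
      refine Finset.sum_congr rfl fun j _ => ?_
      simp [dotProduct_comm x (v j), sq]
    rw [h]
    by_contra hcon
    apply hx
    have h0 : ∀ j ∈ Finset.univ, 0 ≤ w j * (v j ⬝ᵥ x) ^ 2 :=
      fun j _ => mul_nonneg (hw j).le (sq_nonneg _)
    have hz := (Finset.sum_eq_zero_iff_of_nonneg h0).1
      (le_antisymm (not_lt.1 hcon) (Finset.sum_nonneg h0))
    have hv : ∀ j, v j ⬝ᵥ x = 0 := by
      intro j
      have := hz j (Finset.mem_univ j)
      simpa [(hw j).ne'] using this
    have hall : ∀ y ∈ Submodule.span ℝ (Set.range v), y ⬝ᵥ x = 0 := by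
      intro y hy
      induction hy using Submodule.span_induction with
      | mem y hy => obtain ⟨j, rfl⟩ := hy; exact hv j
      | zero => simp
      | add y z _ _ h1 h2 => simp [add_dotProduct, h1, h2]
      | smul a y _ h1 => simp [h1]
    exact dotProduct_self_eq_zero.1 (hall x (by rw [hspan]; trivial))

/-- If the family `{p_i, q_i}_{i=1}^I` of real vectors spans `ℝ^K`, then
`z ↦ log det(∑ i, e^{z i} (p_i p_iᵀ + q_i q_iᵀ))` is convex on `ℝ^I`. -/
theorem logdet_sum_exp_two_rankOne_convex (K I : ℕ) (hK : 0 < K) (hI : 0 < I)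
    (p q : Fin I → Fin K → ℝ)
    (hspan : Submodule.span ℝ (Set.range p ∪ Set.range q) = ⊤) :
    ConvexOn ℝ Set.univ (fun z : Fin I → ℝ =>
      Real.log ((∑ i, Real.exp (z i) •
        (Matrix.vecMulVec (p i) (p i) + Matrix.vecMulVec (q i) (q i))).det)) := by
  set v : Fin I ⊕ Fin I → Fin K → ℝ := Sum.elim p q with hv
  set e : Fin I ⊕ Fin I → Fin I := Sum.elim id id with he
  set N : ℝ := (Fintype.card (Equiv.Perm (Fin K)) : ℝ) with hN
  have hNpos : 0 < N := by
    rw [hN]; exact_mod_cast Fintype.card_pos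
  have hmat : ∀ z : Fin I → ℝ, (∑ i, Real.exp (z i) •
        (Matrix.vecMulVec (p i) (p i) + Matrix.vecMulVec (q i) (q i))) =
      ∑ j, Real.exp (z (e j)) • Matrix.vecMulVec (v j) (v j) := by
    intro z
    simp [hv, he, Fintype.sum_sum_type, Finset.sum_add_distrib, smul_add]
  let c : (Fin K → Fin I ⊕ Fin I) → ℝ := fun f => (Matrix.of fun a => v (f a)).det ^ 2 / N
  let l : (Fin K → Fin I ⊕ Fin I) → (Fin I → ℝ) →ₗ[ℝ] ℝ :=
    fun f => ∑ a, LinearMap.proj (e (f a))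
  have hdet : ∀ z : Fin I → ℝ, (∑ i, Real.exp (z i) •
        (Matrix.vecMulVec (p i) (p i) + Matrix.vecMulVec (q i) (q i))).det =
      ∑ f, c f * Real.exp (l f z) := by
    intro z
    rw [hmat]
    have h := det_expand_s6 (fun j => Real.exp (z (e j))) v
    rw [← hN] at h
    rw [eq_div_of_mul_eq hNpos.ne' ((mul_comm _ _).trans h), Finset.sum_div]
    refine Finset.sum_congr rfl fun f _ => ?_
    simp only [c, l, LinearMap.sum_apply, LinearMap.proj_apply, Real.exp_sum]
    ring
  have hpos : ∀ z : Fin I → ℝ, 0 < ∑ f, c f * Real.exp (l f z) := by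
    intro z
    rw [← hdet, hmat]
    refine det_pos_aux _ (fun j => Real.exp_pos _) v ?_
    rw [hv, Set.Sum.elim_range, hspan]
  simp only [hdet]
  exact log_sum_exp_convex c (fun f => div_nonneg (sq_nonneg _) hNpos.le) l hpos
end

section
/- Let H be an M-by-N complex matrix, Y an M-by-L complex matrix, z ∈ ℝ^N, and β ∈ ℝ. Let Σ = e^β I_M + H diag(e^{z}) H^*, which is Hermitian positive definite and hence invertible. Then for every N-by-L complex matrix Θ, tr(Y^* Σ^{-1} Y) ≤ e^{-β} ‖Y − H Θ‖_F^2 + tr(Θ^* diag(e^{-z}) Θ), where both sides are real numbers. -/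
open Matrix
open scoped ComplexOrder

/-- Completing the square, as an exact matrix identity. -/
lemma completing_square {M N L : ℕ}
    (H : Matrix (Fin M) (Fin N) ℂ) (X R : Matrix (Fin M) (Fin L) ℂ)
    (D D' : Matrix (Fin N) (Fin N) ℂ) (a a' : ℂ) (Θ : Matrix (Fin N) (Fin L) ℂ)
    (hD : Dᴴ = D) (h1 : D * D' = 1) (h2 : D' * D = 1) (ha : star a = a) (haa : a' * a = 1)
    (hY : a • X + H * (D * (Hᴴ * X)) = R + H * Θ) :
    a' • (Rᴴ * R) + Θᴴ * D' * Θ = (R + H * Θ)ᴴ * X + (a' • ((R - a • X)ᴴ * (R - a • X))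
      + (Θ - D * (Hᴴ * X))ᴴ * D' * (Θ - D * (Hᴴ * X))) := by
  have h1' : ∀ W : Matrix (Fin N) (Fin L) ℂ, D * (D' * W) = W := fun W => by
    rw [← Matrix.mul_assoc, h1, Matrix.one_mul]
  have h2' : ∀ W : Matrix (Fin N) (Fin L) ℂ, D' * (D * W) = W := fun W => by
    rw [← Matrix.mul_assoc, h2, Matrix.one_mul]
  have hX : a • (Xᴴ * X) + Xᴴ * (H * (D * (Hᴴ * X))) = Xᴴ * R + Xᴴ * (H * Θ) := by
    rw [← Matrix.mul_add, ← hY, Matrix.mul_add, Matrix.mul_smul]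
  have hX' := eq_sub_of_add_eq hX
  simp only [conjTranspose_sub, conjTranspose_add, conjTranspose_smul, conjTranspose_mul,
    conjTranspose_conjTranspose, Matrix.mul_sub, Matrix.sub_mul, Matrix.add_mul,
    Matrix.mul_assoc, Matrix.smul_mul, Matrix.mul_smul, hD, ha, h1', h2', smul_sub, smul_smul,
    haa, one_smul]
  rw [← mul_assoc, haa, one_mul, hX']
  abel

/-- **Majorization inequality (4).** With `Σ = e^β I + H diag(e^z) Hᴴ`, for every
`Θ` one has `tr(Yᴴ Σ⁻¹ Y) ≤ e^{-β} ‖Y − HΘ‖_F² + tr(Θᴴ diag(e^{-z}) Θ)`.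
Both traces and the squared Frobenius norm (written as `tr((Y−HΘ)ᴴ(Y−HΘ))`) are
real, recovered via real parts. -/
theorem trace_inv_quadratic_upper_bound (M N L : ℕ)
    (H : Matrix (Fin M) (Fin N) ℂ) (Y : Matrix (Fin M) (Fin L) ℂ)
    (z : Fin N → ℝ) (β : ℝ) (Θ : Matrix (Fin N) (Fin L) ℂ) :
    (Matrix.trace (Yᴴ *
        ((Real.exp β : ℂ) • (1 : Matrix (Fin M) (Fin M) ℂ) +
          H * Matrix.diagonal (fun n => (Real.exp (z n) : ℂ)) * Hᴴ)⁻¹ * Y)).re ≤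
      Real.exp (-β) * (Matrix.trace ((Y - H * Θ)ᴴ * (Y - H * Θ))).re +
        (Matrix.trace (Θᴴ * Matrix.diagonal (fun n => (Real.exp (-(z n)) : ℂ)) * Θ)).re := by
  set D : Matrix (Fin N) (Fin N) ℂ := Matrix.diagonal (fun n => (Real.exp (z n) : ℂ)) with hDdef
  set D' : Matrix (Fin N) (Fin N) ℂ := Matrix.diagonal (fun n => (Real.exp (-(z n)) : ℂ))
    with hDdef'
  set S := (Real.exp β : ℂ) • (1 : Matrix (Fin M) (Fin M) ℂ) + H * D * Hᴴ with hS
  have hDp : D.PosSemidef := by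
    refine PosSemidef.diagonal fun n => ?_
    exact Complex.zero_le_real.mpr (Real.exp_pos _).le
  have hDp' : D'.PosSemidef := by
    refine PosSemidef.diagonal fun n => ?_
    exact Complex.zero_le_real.mpr (Real.exp_pos _).le
  have hSp : S.PosDef := by
    refine PosDef.add_posSemidef ?_ (hDp.mul_mul_conjTranspose_same H)
    exact PosDef.one.smul (Complex.zero_lt_real.mpr (Real.exp_pos _))
  have hdet : IsUnit S.det := (Matrix.isUnit_iff_isUnit_det _).mp hSp.isUnit
  have hSX : S * (S⁻¹ * Y) = Y := Matrix.mul_nonsing_inv_cancel_left _ _ hdet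
  have h1 : D * D' = 1 := by
    rw [hDdef, hDdef', diagonal_mul_diagonal, ← diagonal_one]
    congr 1; funext n
    rw [← Complex.ofReal_mul, ← Real.exp_add]; simp
  have h2 : D' * D = 1 := by
    rw [hDdef, hDdef', diagonal_mul_diagonal, ← diagonal_one]
    congr 1; funext n
    rw [← Complex.ofReal_mul, ← Real.exp_add]; simp
  have haa : ((Real.exp (-β) : ℝ) : ℂ) * ((Real.exp β : ℝ) : ℂ) = 1 := by
    rw [← Complex.ofReal_mul, ← Real.exp_add]; simp
  have key := completing_square H (S⁻¹ * Y) (Y - H * Θ) D D' (Real.exp β : ℂ)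
    (Real.exp (-β) : ℂ) Θ hDp.isHermitian h1 h2 (Complex.conj_ofReal _) haa (by
      rw [sub_add_cancel]
      conv_rhs => rw [← hSX]
      rw [hS, Matrix.add_mul, Matrix.smul_mul, Matrix.one_mul]
      simp only [Matrix.mul_assoc])
  rw [sub_add_cancel] at key
  have keyt := congrArg (fun W => (Matrix.trace W).re) key
  simp only [trace_add, trace_smul, Complex.add_re, smul_eq_mul, Complex.re_ofReal_mul] at keyt
  rw [Matrix.mul_assoc Yᴴ, keyt]
  have p1 := (Complex.le_def.mp (posSemidef_conjTranspose_mul_self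
    (Y - H * Θ - (Real.exp β : ℂ) • (S⁻¹ * Y))).trace_nonneg).1
  have p2 := (Complex.le_def.mp (hDp'.conjTranspose_mul_mul_same
    (Θ - D * (Hᴴ * (S⁻¹ * Y)))).trace_nonneg).1
  have p3 := mul_nonneg (Real.exp_pos (-β)).le p1
  simp only [Complex.zero_re] at p2 p3
  linarith
end

section
/- Let H be an M-by-N complex matrix, Y an M-by-L complex matrix, z ∈ ℝ^N, and β ∈ ℝ. Let Σ = e^β I_M + H diag(e^{z}) H^*. Define Θ* = e^{-β} (e^{-β} H^* H + diag(e^{-z}))^{-1} H^* Y, where the matrix e^{-β} H^* H + diag(e^{-z}) is Hermitian positive definite and hence invertible. Then tr(Y^* Σ^{-1} Y) = e^{-β} ‖Y − H Θ*‖_F^2 + tr((Θ*)^* diag(e^{-z}) Θ*). -/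
open Matrix
open scoped ComplexOrder

/-- **Equality case of the majorization inequality (4), at the choice (5).**
With `Σ = e^β I + H diag(e^z) Hᴴ` and
`Θ* = e^{-β} (e^{-β} Hᴴ H + diag(e^{-z}))⁻¹ Hᴴ Y`, one has
`tr(Yᴴ Σ⁻¹ Y) = e^{-β} ‖Y − HΘ*‖_F² + tr((Θ*)ᴴ diag(e^{-z}) Θ*)`. -/
theorem trace_inv_quadratic_upper_bound_eq (M N L : ℕ)
    (H : Matrix (Fin M) (Fin N) ℂ) (Y : Matrix (Fin M) (Fin L) ℂ)
    (z : Fin N → ℝ) (β : ℝ) :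
    let Θ : Matrix (Fin N) (Fin L) ℂ :=
      (Real.exp (-β) : ℂ) •
        (((Real.exp (-β) : ℂ) • (Hᴴ * H) +
          Matrix.diagonal (fun n => (Real.exp (-(z n)) : ℂ)))⁻¹ * (Hᴴ * Y))
    (Matrix.trace (Yᴴ *
        ((Real.exp β : ℂ) • (1 : Matrix (Fin M) (Fin M) ℂ) +
          H * Matrix.diagonal (fun n => (Real.exp (z n) : ℂ)) * Hᴴ)⁻¹ * Y)).re =
      Real.exp (-β) * (Matrix.trace ((Y - H * Θ)ᴴ * (Y - H * Θ))).re +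
        (Matrix.trace (Θᴴ * Matrix.diagonal (fun n => (Real.exp (-(z n)) : ℂ)) * Θ)).re := by
  intro Θ
  set a : ℂ := (Real.exp (-β) : ℂ) with ha
  set b : ℂ := (Real.exp β : ℂ) with hb
  set D : Matrix (Fin N) (Fin N) ℂ := Matrix.diagonal (fun n => (Real.exp (-(z n)) : ℂ)) with hD
  set E : Matrix (Fin N) (Fin N) ℂ := Matrix.diagonal (fun n => (Real.exp (z n) : ℂ)) with hE
  have hab : b * a = 1 := by
    rw [ha, hb, ← Complex.ofReal_mul, ← Real.exp_add]; simp
  have ha0 : 0 < a := by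
    rw [ha]; exact_mod_cast Real.exp_pos _
  have hb0 : 0 < b := by
    rw [hb]; exact_mod_cast Real.exp_pos _
  have hED : E * D = 1 := by
    rw [hE, hD, Matrix.diagonal_mul_diagonal, ← Matrix.diagonal_one]
    congr 1
    funext n
    rw [← Complex.ofReal_mul, ← Real.exp_add]; simp
  have hDpos : D.PosDef := by
    rw [hD]
    refine Matrix.PosDef.diagonal (fun n => ?_)
    exact_mod_cast Real.exp_pos _
  have hEpos : E.PosDef := by
    rw [hE]
    refine Matrix.PosDef.diagonal (fun n => ?_)
    exact_mod_cast Real.exp_pos _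
  have hK : (a • (Hᴴ * H) + D).PosDef :=
    Matrix.PosDef.posSemidef_add ((Matrix.posSemidef_conjTranspose_mul_self H).smul ha0.le) hDpos
  have hS : (b • (1 : Matrix (Fin M) (Fin M) ℂ) + H * E * Hᴴ).PosDef :=
    Matrix.PosDef.add_posSemidef (Matrix.PosDef.one.smul hb0)
      (hEpos.posSemidef.mul_mul_conjTranspose_same H)
  have hKdet := (Matrix.isUnit_iff_isUnit_det _).1 hK.isUnit
  have hSdet := (Matrix.isUnit_iff_isUnit_det _).1 hS.isUnit
  have h1 : (a • (Hᴴ * H) + D) * Θ = a • (Hᴴ * Y) := by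
    change _ * (a • _) = _
    rw [Matrix.mul_smul, Matrix.mul_nonsing_inv_cancel_left _ _ hKdet]
  have h2 : D * Θ = a • (Hᴴ * (Y - H * Θ)) := by
    rw [Matrix.mul_sub, smul_sub, ← h1, Matrix.add_mul, Matrix.smul_mul, Matrix.mul_assoc]
    abel
  clear_value Θ
  have h3 : Θ = a • (E * (Hᴴ * (Y - H * Θ))) := by
    rw [← Matrix.mul_smul, ← h2, ← Matrix.mul_assoc, hED, Matrix.one_mul]
  have h4 : (b • (1 : Matrix (Fin M) (Fin M) ℂ) + H * E * Hᴴ) * (a • (Y - H * Θ)) = Y := by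
    rw [Matrix.add_mul, Matrix.smul_mul, Matrix.one_mul, smul_smul, hab, one_smul,
      Matrix.mul_smul, Matrix.mul_assoc, Matrix.mul_assoc, ← Matrix.mul_smul, ← h3]
    abel
  have h5 : (b • (1 : Matrix (Fin M) (Fin M) ℂ) + H * E * Hᴴ)⁻¹ * Y = a • (Y - H * Θ) := by
    conv_lhs => rw [← h4]
    rw [Matrix.nonsing_inv_mul_cancel_left _ _ hSdet]
  have h6 : Yᴴ * (a • (Y - H * Θ)) = a • ((Y - H * Θ)ᴴ * (Y - H * Θ)) + Θᴴ * D * Θ := by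
    rw [Matrix.mul_assoc Θᴴ, h2, Matrix.mul_smul, Matrix.mul_smul, ← smul_add,
      ← Matrix.mul_assoc Θᴴ, ← Matrix.conjTranspose_mul, ← Matrix.add_mul,
      ← Matrix.conjTranspose_add, sub_add_cancel]
  rw [Matrix.mul_assoc, h5, h6, Matrix.trace_add, Matrix.trace_smul, Complex.add_re, smul_eq_mul,
    ha, Complex.re_ofReal_mul]
end

section
/- Let H be an M-by-N complex matrix, Y an M-by-L complex matrix, z ∈ ℝ^N, and β ∈ ℝ. Let Σ = e^β I_M + H diag(e^{z}) H^*, and for an N-by-L complex matrix Θ define F(Θ) = e^{-β} ‖Y − H Θ‖_F^2 + tr(Θ^* diag(e^{-z}) Θ). Then F(Θ) = tr(Y^* Σ^{-1} Y) holds if and only if Θ = Θ* := e^{-β} (e^{-β} H^* H + diag(e^{-z}))^{-1} H^* Y; that is, Θ* is the unique minimizer of F over ℂ^{N×L}, with minimum value tr(Y^* Σ^{-1} Y). -/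
open Matrix

open scoped ComplexOrder in
lemma aux_trace_eq_zero {N L : ℕ} (A : Matrix (Fin N) (Fin N) ℂ) (hA : A.PosDef)
    (X : Matrix (Fin N) (Fin L) ℂ) (h : (Matrix.trace (Xᴴ * A * X)).re = 0) : X = 0 := by
  have hps : (Xᴴ * A * X).PosSemidef := hA.posSemidef.conjTranspose_mul_mul_same X
  have htr : Matrix.trace (Xᴴ * A * X) = 0 := by
    have := hps.trace_nonneg
    rw [Complex.le_def] at this
    exact Complex.ext h this.2.symm
  have h0 : Xᴴ * A * X = 0 := hps.trace_eq_zero_iff.mp htr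
  ext i l
  by_contra hne
  have hcol : (fun i => X i l) ≠ 0 := fun hc => hne (congrFun hc i)
  have hpos := hA.dotProduct_mulVec_pos hcol
  have hll := congrFun (congrFun h0 l) l
  have : star (fun i => X i l) ⬝ᵥ A *ᵥ (fun i => X i l) = (Xᴴ * A * X) l l := by
    rw [Matrix.mul_assoc]
    simp [Matrix.mul_apply, dotProduct, mulVec]
  rw [this, hll] at hpos
  simp at hpos

lemma aux_identity {M N L : ℕ} (H : Matrix (Fin M) (Fin N) ℂ) (Y : Matrix (Fin M) (Fin L) ℂ)
    (D E A : Matrix (Fin N) (Fin N) ℂ) (S : Matrix (Fin M) (Fin M) ℂ) (b c : ℂ)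
    (hb : star b = b) (hcb : c * b = 1) (hED : E * D = 1)
    (hA : A = b • (Hᴴ * H) + D) (hAH : Aᴴ = A)
    (hS : S = c • (1 : Matrix (Fin M) (Fin M) ℂ) + H * E * Hᴴ) (hSu : IsUnit S.det)
    (T Θ : Matrix (Fin N) (Fin L) ℂ) (hT : A * T = b • (Hᴴ * Y)) :
    b • ((Y - H * Θ)ᴴ * (Y - H * Θ)) + Θᴴ * D * Θ =
      (Θ - T)ᴴ * A * (Θ - T) + Yᴴ * S⁻¹ * Y := by
  have h1 : S * (b • (Y - H * T)) = Y := by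
    have e1 : D * T = b • (Hᴴ * Y) - b • (Hᴴ * (H * T)) := by
      rw [← hT, hA, Matrix.add_mul, Matrix.smul_mul, Matrix.mul_assoc]; abel
    have e2 : T = E * (D * T) := by rw [← Matrix.mul_assoc, hED, Matrix.one_mul]
    have e3 : H * T = b • (H * (E * (Hᴴ * Y))) - b • (H * (E * (Hᴴ * (H * T)))) := by
      conv_lhs => rw [e2, e1]
      simp only [Matrix.mul_sub, Matrix.mul_smul]
    rw [hS, Matrix.add_mul, Matrix.smul_mul, Matrix.one_mul, smul_smul, hcb, one_smul]
    simp only [Matrix.mul_smul, Matrix.mul_sub, smul_sub, Matrix.mul_assoc]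
    rw [← e3]; abel
  have h2 : S⁻¹ * Y = b • (Y - H * T) := by
    conv_lhs => rw [← h1]
    rw [← Matrix.mul_assoc, Matrix.nonsing_inv_mul _ hSu, Matrix.one_mul]
  have h3 : Tᴴ * A = b • (Yᴴ * H) := by
    have := congrArg conjTranspose hT
    simpa [Matrix.conjTranspose_mul, hAH, Matrix.conjTranspose_smul, hb] using this
  have h4 : (Θ - T)ᴴ * A * (Θ - T) = Θᴴ * A * Θ - b • (Θᴴ * (Hᴴ * Y))
      - b • (Yᴴ * (H * Θ)) + b • (Yᴴ * (H * T)) := by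
    rw [Matrix.conjTranspose_sub, Matrix.sub_mul, h3]
    simp only [Matrix.mul_sub, Matrix.sub_mul, Matrix.mul_assoc, hT, Matrix.mul_smul,
      Matrix.smul_mul]
    abel
  rw [h4, Matrix.mul_assoc Yᴴ, h2, hA]
  simp only [Matrix.conjTranspose_sub, Matrix.conjTranspose_mul, Matrix.mul_sub, Matrix.sub_mul,
    Matrix.mul_add, Matrix.add_mul, Matrix.mul_assoc, Matrix.mul_smul, Matrix.smul_mul, smul_sub]
  abel

open scoped ComplexOrder in
/-- **Uniqueness of the equality case of the majorization inequality (4).**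
With `Σ = e^β I + H diag(e^z) Hᴴ` and
`F(Θ) = e^{-β} ‖Y − HΘ‖_F² + tr(Θᴴ diag(e^{-z}) Θ)`, equality
`F(Θ) = tr(Yᴴ Σ⁻¹ Y)` holds iff `Θ = Θ* = e^{-β}(e^{-β} Hᴴ H + diag(e^{-z}))⁻¹ Hᴴ Y`;
i.e. `Θ*` is the unique minimizer of `F`, with minimum value `tr(Yᴴ Σ⁻¹ Y)`. -/
theorem trace_inv_quadratic_upper_bound_eq_iff (M N L : ℕ)
    (H : Matrix (Fin M) (Fin N) ℂ) (Y : Matrix (Fin M) (Fin L) ℂ)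
    (z : Fin N → ℝ) (β : ℝ) (Θ : Matrix (Fin N) (Fin L) ℂ) :
    (Real.exp (-β) * (Matrix.trace ((Y - H * Θ)ᴴ * (Y - H * Θ))).re +
        (Matrix.trace (Θᴴ * Matrix.diagonal (fun n => (Real.exp (-(z n)) : ℂ)) * Θ)).re =
      (Matrix.trace (Yᴴ *
        ((Real.exp β : ℂ) • (1 : Matrix (Fin M) (Fin M) ℂ) +
          H * Matrix.diagonal (fun n => (Real.exp (z n) : ℂ)) * Hᴴ)⁻¹ * Y)).re) ↔
    Θ = (Real.exp (-β) : ℂ) •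
        (((Real.exp (-β) : ℂ) • (Hᴴ * H) +
          Matrix.diagonal (fun n => (Real.exp (-(z n)) : ℂ)))⁻¹ * (Hᴴ * Y)) := by
  set b : ℂ := (Real.exp (-β) : ℂ) with hbdef
  set D := Matrix.diagonal (fun n => (Real.exp (-(z n)) : ℂ)) with hD
  set E := Matrix.diagonal (fun n => (Real.exp (z n) : ℂ)) with hE
  set A := b • (Hᴴ * H) + D with hA
  set S := (Real.exp β : ℂ) • (1 : Matrix (Fin M) (Fin M) ℂ) + H * E * Hᴴ with hS
  have hpos : ∀ x : ℝ, (0 : ℂ) < (Real.exp x : ℂ) := fun x => by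
    exact_mod_cast Real.exp_pos x
  have hDp : D.PosDef := Matrix.PosDef.diagonal (fun n => hpos _)
  have hEp : E.PosDef := Matrix.PosDef.diagonal (fun n => hpos _)
  have hAp : A.PosDef :=
    Matrix.PosDef.posSemidef_add ((Matrix.posSemidef_conjTranspose_mul_self H).smul (hpos _).le) hDp
  have hSp : S.PosDef :=
    Matrix.PosDef.add_posSemidef (Matrix.PosDef.one.smul (hpos _))
      (hEp.posSemidef.mul_mul_conjTranspose_same H)
  have hAu : IsUnit A.det := (Matrix.isUnit_iff_isUnit_det A).mp hAp.isUnit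
  have hSu : IsUnit S.det := (Matrix.isUnit_iff_isUnit_det S).mp hSp.isUnit
  set T := b • (A⁻¹ * (Hᴴ * Y)) with hTdef
  have hT : A * T = b • (Hᴴ * Y) := by
    rw [hTdef, Matrix.mul_smul, ← Matrix.mul_assoc, Matrix.mul_nonsing_inv _ hAu, Matrix.one_mul]
  have hb : star b = b := Complex.conj_ofReal _
  have hcb : (Real.exp β : ℂ) * b = 1 := by
    rw [hbdef, ← Complex.ofReal_mul, ← Real.exp_add]; simp
  have hED : E * D = 1 := by
    rw [hE, hD, Matrix.diagonal_mul_diagonal, ← Matrix.diagonal_one]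
    congr 1
    ext n
    rw [← Complex.ofReal_mul, ← Real.exp_add]; simp
  have key := aux_identity H Y D E A S b _ hb hcb hED hA hAp.isHermitian hS hSu T Θ hT
  have key2 := congrArg (fun X => (Matrix.trace X).re) key
  simp only [Matrix.trace_add, Matrix.trace_smul, Complex.add_re, smul_eq_mul] at key2
  rw [hbdef, Complex.re_ofReal_mul] at key2
  rw [key2]
  constructor
  · intro h
    have := aux_trace_eq_zero A hAp (Θ - T) (by linarith)
    exact sub_eq_zero.mp this
  · intro h
    rw [h]; simp
end

section
/- Fix positive reals a₀, b₀, a nonnegative real τ, a positive integer L, an M-by-N complex matrix H, and an M-by-L complex matrix Y. Define the cost 𝓛(z, β) = L·log det(Σ(z,β)) + tr(Y^* Σ(z,β)^{-1} Y) + R(z, β) + τ ‖D z‖₁, where Σ(z,β) = e^β I_M + H diag(e^{z}) H^* and R(z, β) = ∑_{n=1}^N ((a₀+1) z_n + b₀ e^{-z_n}) + (a₀+1) β + b₀ e^{-β}. Fix (z⁰, β⁰) ∈ ℝ^N × ℝ and let Θ = e^{-β⁰} (e^{-β⁰} H^* H + diag(e^{-z⁰}))^{-1} H^* Y. Define the surrogate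 g(z, β) = L·log det(Σ(z,β)) + e^{-β} ‖Y − H Θ‖_F^2 + tr(Θ^* diag(e^{-z}) Θ) + R(z, β) + τ ‖D z‖₁. Then g(z, β) ≥ 𝓛(z, β) for all (z, β) ∈ ℝ^N × ℝ, and g(z⁰, β⁰) = 𝓛(z⁰, β⁰). -/
open Matrix

/-- `‖D z‖₁ = ∑_{n=2}^N |z_n − z_{n-1}|`, the total variation of `z ∈ ℝ^N`,
where `D` is the `(N−1) × N` first-order difference matrix. -/
noncomputable def tvNorm {N : ℕ} (z : Fin N → ℝ) : ℝ :=
  ∑ i : Fin (N - 1),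
    |z ⟨i.val + 1, by have := i.isLt; omega⟩ - z ⟨i.val, by have := i.isLt; omega⟩|

open scoped ComplexOrder in
theorem key_identity {M N L : ℕ} (H : Matrix (Fin M) (Fin N) ℂ) (Y : Matrix (Fin M) (Fin L) ℂ)
    (z : Fin N → ℝ) (β : ℝ) (T : Matrix (Fin N) (Fin L) ℂ) :
    let B : Matrix (Fin N) (Fin N) ℂ := (Real.exp (-β) : ℂ) • (Hᴴ * H) +
          Matrix.diagonal (fun n => (Real.exp (-(z n)) : ℂ))
    let T0 : Matrix (Fin N) (Fin L) ℂ := (Real.exp (-β) : ℂ) • (B⁻¹ * (Hᴴ * Y))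
    B.PosDef ∧
    (Real.exp (-β) : ℂ) • ((Y - H * T)ᴴ * (Y - H * T)) +
      Tᴴ * Matrix.diagonal (fun n => (Real.exp (-(z n)) : ℂ)) * T =
      Yᴴ * ((Real.exp β : ℂ) • (1 : Matrix (Fin M) (Fin M) ℂ) +
        H * Matrix.diagonal (fun n => (Real.exp (z n) : ℂ)) * Hᴴ)⁻¹ * Y +
      (T - T0)ᴴ * B * (T - T0) := by
  intro B T0
  have hE' : (Matrix.diagonal (fun n => (Real.exp (-(z n)) : ℂ))).PosDef := by
    rw [Matrix.posDef_diagonal_iff]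
    intro n
    exact_mod_cast Real.exp_pos _
  have hE : (Matrix.diagonal (fun n => (Real.exp (z n) : ℂ))).PosSemidef := by
    rw [Matrix.posSemidef_diagonal_iff]
    intro n
    exact_mod_cast (Real.exp_pos _).le
  have hc : (0 : ℂ) < (Real.exp (-β) : ℂ) := by exact_mod_cast Real.exp_pos _
  have hc' : (0 : ℂ) < (Real.exp β : ℂ) := by exact_mod_cast Real.exp_pos _
  have hB : B.PosDef :=
    Matrix.PosDef.posSemidef_add ((Matrix.posSemidef_conjTranspose_mul_self H).smul hc.le) hE'
  have hS : ((Real.exp β : ℂ) • (1 : Matrix (Fin M) (Fin M) ℂ) +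
        H * Matrix.diagonal (fun n => (Real.exp (z n) : ℂ)) * Hᴴ).PosDef :=
    (Matrix.PosDef.one.smul hc').add_posSemidef (hE.mul_mul_conjTranspose_same H)
  refine ⟨hB, ?_⟩
  have hBu : IsUnit B.det := (Matrix.isUnit_iff_isUnit_det _).1 hB.isUnit
  have hSu := (Matrix.isUnit_iff_isUnit_det _).1 hS.isUnit
  have hEE : Matrix.diagonal (fun n => (Real.exp (z n) : ℂ)) *
      Matrix.diagonal (fun n => (Real.exp (-(z n)) : ℂ)) = 1 := by
    rw [Matrix.diagonal_mul_diagonal, ← Matrix.diagonal_one]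
    congr 1
    funext n
    rw [← Complex.ofReal_mul, ← Real.exp_add]
    simp
  have hcc : (Real.exp β : ℂ) * (Real.exp (-β) : ℂ) = 1 := by
    rw [← Complex.ofReal_mul, ← Real.exp_add]
    simp
  have hBT : B * T0 = (Real.exp (-β) : ℂ) • (Hᴴ * Y) := by
    simp only [T0, Matrix.mul_smul]
    rw [Matrix.mul_nonsing_inv_cancel_left _ _ hBu]
  have hstar : star (Real.exp (-β) : ℂ) = (Real.exp (-β) : ℂ) := Complex.conj_ofReal _
  clear_value T0
  have hTB : T0ᴴ * B = (Real.exp (-β) : ℂ) • (Yᴴ * H) := by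
    have := congrArg Matrix.conjTranspose hBT
    rwa [Matrix.conjTranspose_mul, hB.isHermitian.eq, Matrix.conjTranspose_smul, hstar,
      Matrix.conjTranspose_mul, Matrix.conjTranspose_conjTranspose] at this
  have hBdef : B = (Real.exp (-β) : ℂ) • (Hᴴ * H) +
          Matrix.diagonal (fun n => (Real.exp (-(z n)) : ℂ)) := rfl
  clear_value B
  generalize Matrix.diagonal (fun n => (Real.exp (-(z n)) : ℂ)) = E' at *
  generalize Matrix.diagonal (fun n => (Real.exp (z n) : ℂ)) = E at *
  generalize (Real.exp (-β) : ℂ) = c at *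
  generalize (Real.exp β : ℂ) = c' at *
  have hE'T : E' * T0 = c • (Hᴴ * Y) - c • (Hᴴ * H * T0) := by
    rw [← hBT, hBdef, Matrix.add_mul, Matrix.smul_mul]
    abel
  have hT0 : c • (E * (Hᴴ * Y)) - c • (E * (Hᴴ * (H * T0))) = T0 := by
    have := congrArg (fun X => E * X) hE'T
    simp only [← Matrix.mul_assoc, hEE, Matrix.one_mul] at this
    refine Eq.trans ?_ this.symm
    simp only [Matrix.mul_sub, Matrix.mul_smul, Matrix.mul_assoc]
  have hW : (c' • (1 : Matrix (Fin M) (Fin M) ℂ) + H * E * Hᴴ)⁻¹ * Y = c • (Y - H * T0) := by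
    have h1 : (c' • (1 : Matrix (Fin M) (Fin M) ℂ) + H * E * Hᴴ) * (c • (Y - H * T0)) = Y := by
      have h2 : (H * E * Hᴴ) * (c • (Y - H * T0)) = H * T0 := by
        conv_rhs => rw [← hT0]
        simp only [Matrix.mul_sub, Matrix.mul_smul, Matrix.mul_assoc, smul_sub]
      rw [Matrix.add_mul, h2, Matrix.smul_mul, Matrix.one_mul, smul_smul, hcc, one_smul]
      abel
    conv_lhs => rw [← h1]
    rw [Matrix.nonsing_inv_mul_cancel_left _ _ hSu]
  rw [Matrix.mul_assoc Yᴴ, hW]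
  have e1 : (T - T0)ᴴ * B * (T - T0) = Tᴴ * B * T - c • (Tᴴ * (Hᴴ * Y)) - c • (Yᴴ * H * T)
      + c • (Yᴴ * H * T0) := by
    rw [Matrix.conjTranspose_sub, Matrix.sub_mul, hTB, Matrix.mul_sub, Matrix.sub_mul,
      Matrix.sub_mul, Matrix.mul_assoc Tᴴ B T0, hBT]
    simp only [Matrix.mul_smul, Matrix.smul_mul]
    abel
  rw [e1, hBdef]
  simp only [Matrix.conjTranspose_sub, Matrix.conjTranspose_mul, Matrix.mul_sub, Matrix.sub_mul,
    Matrix.mul_add, Matrix.add_mul, Matrix.mul_smul, Matrix.smul_mul, smul_sub, Matrix.mul_assoc]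
  abel

/-- **Majorization property of the surrogate (6).**  With
`Σ(z,β) = e^β I + H diag(e^z) Hᴴ`,
`R(z,β) = ∑ₙ ((a₀+1) zₙ + b₀ e^{-zₙ}) + (a₀+1) β + b₀ e^{-β}`,
cost `𝓛(z,β) = L log det Σ(z,β) + tr(Yᴴ Σ(z,β)⁻¹ Y) + R(z,β) + τ ‖D z‖₁`, and,
for fixed `(z⁰, β⁰)`, `Θ = e^{-β⁰}(e^{-β⁰} Hᴴ H + diag(e^{-z⁰}))⁻¹ Hᴴ Y` and
surrogate `g(z,β) = L log det Σ(z,β) + e^{-β} ‖Y − HΘ‖_F² + tr(Θᴴ diag(e^{-z}) Θ)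
+ R(z,β) + τ ‖D z‖₁`, one has `g ≥ 𝓛` everywhere and `g(z⁰,β⁰) = 𝓛(z⁰,β⁰)`. -/
theorem surrogate_majorizes (M N L : ℕ) (hL : 0 < L)
    (a0 b0 : ℝ) (ha0 : 0 < a0) (hb0 : 0 < b0) (τ : ℝ) (hτ : 0 ≤ τ)
    (H : Matrix (Fin M) (Fin N) ℂ) (Y : Matrix (Fin M) (Fin L) ℂ)
    (z0 : Fin N → ℝ) (β0 : ℝ) :
    let Sig : (Fin N → ℝ) → ℝ → Matrix (Fin M) (Fin M) ℂ := fun z β =>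
      (Real.exp β : ℂ) • (1 : Matrix (Fin M) (Fin M) ℂ) +
        H * Matrix.diagonal (fun n => (Real.exp (z n) : ℂ)) * Hᴴ
    let R : (Fin N → ℝ) → ℝ → ℝ := fun z β =>
      (∑ n, ((a0 + 1) * z n + b0 * Real.exp (-(z n)))) +
        (a0 + 1) * β + b0 * Real.exp (-β)
    let cost : (Fin N → ℝ) → ℝ → ℝ := fun z β =>
      L * Real.log ((Sig z β).det.re) +
        (Matrix.trace (Yᴴ * (Sig z β)⁻¹ * Y)).re + R z β + τ * tvNorm z
    let Θ : Matrix (Fin N) (Fin L) ℂ :=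
      (Real.exp (-β0) : ℂ) •
        (((Real.exp (-β0) : ℂ) • (Hᴴ * H) +
          Matrix.diagonal (fun n => (Real.exp (-(z0 n)) : ℂ)))⁻¹ * (Hᴴ * Y))
    let g : (Fin N → ℝ) → ℝ → ℝ := fun z β =>
      L * Real.log ((Sig z β).det.re) +
        Real.exp (-β) * (Matrix.trace ((Y - H * Θ)ᴴ * (Y - H * Θ))).re +
        (Matrix.trace (Θᴴ * Matrix.diagonal (fun n => (Real.exp (-(z n)) : ℂ)) * Θ)).re +
        R z β + τ * tvNorm z
    (∀ (z : Fin N → ℝ) (β : ℝ), cost z β ≤ g z β) ∧ g z0 β0 = cost z0 β0 := by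
  intro Sig R cost Θ g
  have tr_re : ∀ (z : Fin N → ℝ) (β : ℝ),
      Real.exp (-β) * (Matrix.trace ((Y - H * Θ)ᴴ * (Y - H * Θ))).re +
        (Matrix.trace (Θᴴ * Matrix.diagonal (fun n => (Real.exp (-(z n)) : ℂ)) * Θ)).re =
      (Matrix.trace ((Real.exp (-β) : ℂ) • ((Y - H * Θ)ᴴ * (Y - H * Θ)) +
        Θᴴ * Matrix.diagonal (fun n => (Real.exp (-(z n)) : ℂ)) * Θ)).re := by
    intro z β
    rw [Matrix.trace_add, Matrix.trace_smul, Complex.add_re, smul_eq_mul, Complex.re_ofReal_mul]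
  constructor
  · intro z β
    obtain ⟨hB, hk⟩ := key_identity H Y z β Θ
    have h := tr_re z β
    rw [hk, Matrix.trace_add, Complex.add_re] at h
    open scoped ComplexOrder in
    have hnn := (Complex.le_def.1 (hB.posSemidef.conjTranspose_mul_mul_same
      (Θ - (Real.exp (-β) : ℂ) • (((Real.exp (-β) : ℂ) • (Hᴴ * H) +
          Matrix.diagonal (fun n => (Real.exp (-(z n)) : ℂ)))⁻¹ * (Hᴴ * Y)))).trace_nonneg).1
    rw [Complex.zero_re] at hnn
    simp only [cost, g, Sig]
    linarith
  · obtain ⟨hB, hk⟩ := key_identity H Y z0 β0 Θ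
    have h := tr_re z0 β0
    rw [hk] at h
    rw [show Θ - (Real.exp (-β0) : ℂ) • (((Real.exp (-β0) : ℂ) • (Hᴴ * H) +
          Matrix.diagonal (fun n => (Real.exp (-(z0 n)) : ℂ)))⁻¹ * (Hᴴ * Y)) = 0 from sub_self _,
      Matrix.mul_zero, add_zero] at h
    simp only [cost, g, Sig]
    linarith
end

section
/- Let H be an M-by-N complex matrix, L a positive integer, c ≥ 0 a real number, w ∈ ℝ^N a vector with nonnegative entries, τ ≥ 0, and a₀, b₀ > 0. The function on ℝ^N × ℝ given by (z, β) ↦ L·log det(e^β I_M + H diag(e^{z}) H^*) + c·e^{-β} + ∑_{n=1}^N w_n e^{-z_n} + ∑_{n=1}^N ((a₀+1) z_n + b₀ e^{-z_n}) + (a₀+1) β + b₀ e^{-β} + τ ‖D z‖₁ is convex on ℝ^{N+1}. -/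
open Matrix

/-- Symmetrised Cauchy-Binet expansion of `det (A D Aᴴ)`. -/
theorem cb_expand {ι : Type*} [Fintype ι] [DecidableEq ι] (M : ℕ)
    (A : Matrix (Fin M) ι ℂ) (d : ι → ℂ) :
    (M.factorial : ℂ) * (A * Matrix.diagonal d * Aᴴ).det =
      ∑ f : Fin M → ι, (∏ i, d (f i)) *
        ((A.submatrix id f).det * star (A.submatrix id f).det) := by
  have h1 : (A * Matrix.diagonal d * Aᴴ).det =
      ∑ f : Fin M → ι, (∏ i, (A i (f i) * d (f i))) * (Aᴴ.submatrix f id).det := by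
    have hrow : (A * Matrix.diagonal d * Aᴴ) =
        fun i => ∑ k, (A i k * d k) • (Aᴴ k) := by
      funext i j
      simp [Matrix.mul_apply, Matrix.diagonal_apply, Finset.sum_apply]
    rw [hrow]
    have h := (Matrix.detRowAlternating (R := ℂ) (n := Fin M)).toMultilinearMap.map_sum
      (fun i (k : ι) => (A i k * d k) • (Aᴴ k))
    refine h.trans ?_
    refine Finset.sum_congr rfl fun f _ => ?_
    have h2 := (Matrix.detRowAlternating (R := ℂ) (n := Fin M)).toMultilinearMap.map_smul_univ
      (fun i => A i (f i) * d (f i)) (fun i => Aᴴ (f i))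
    exact h2
  have h3 : ∀ σ : Equiv.Perm (Fin M), (A * Matrix.diagonal d * Aᴴ).det =
      ∑ f : Fin M → ι, (∏ i, d (f i)) *
        (((Equiv.Perm.sign σ : ℤ) : ℂ) * (∏ i, A i (f (σ i))) *
          star (A.submatrix id f).det) := by
    intro σ
    rw [h1, ← Equiv.sum_comp (Equiv.arrowCongr σ.symm (Equiv.refl ι))]
    refine Finset.sum_congr rfl fun f _ => ?_
    have e1 : (Equiv.arrowCongr σ.symm (Equiv.refl ι)) f = f ∘ σ := by
      funext i; simp [Equiv.arrowCongr]
    rw [e1]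
    have e2 : (Aᴴ.submatrix (f ∘ σ) id).det =
        ((Equiv.Perm.sign σ : ℤ) : ℂ) * star (A.submatrix id f).det := by
      have : Aᴴ.submatrix (f ∘ σ) id = ((A.submatrix id f)ᴴ).submatrix σ id := by
        ext i j; simp
      rw [this, Matrix.det_permute, Matrix.det_conjTranspose]
    rw [e2, Finset.prod_mul_distrib]
    have e3 : ∏ i, d ((f ∘ σ) i) = ∏ i, d (f i) := Equiv.prod_comp σ (fun i => d (f i))
    rw [e3]
    simp only [Function.comp]
    ring
  have h4 : (M.factorial : ℂ) * (A * Matrix.diagonal d * Aᴴ).det =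
      ∑ _σ : Equiv.Perm (Fin M), (A * Matrix.diagonal d * Aᴴ).det := by
    rw [Finset.sum_const, Finset.card_univ, Fintype.card_perm, Fintype.card_fin, nsmul_eq_mul]
  rw [h4, Finset.sum_congr rfl (fun σ _ => h3 σ), Finset.sum_comm]
  refine Finset.sum_congr rfl fun f _ => ?_
  rw [← Finset.mul_sum, ← Finset.sum_mul]
  congr 2
  rw [← Matrix.det_transpose, Matrix.det_apply']
  rfl

/-- Weighted log-sum-exp inequality. -/
theorem lse_ineq {κ : Type*} [Fintype κ] (c x y : κ → ℝ) (hc : ∀ k, 0 ≤ c k)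
    (hpos : ∃ k, 0 < c k) (a b : ℝ) (ha : 0 ≤ a) (hb : 0 ≤ b) (hab : a + b = 1) :
    Real.log (∑ k, c k * Real.exp (a * x k + b * y k)) ≤
      a * Real.log (∑ k, c k * Real.exp (x k)) + b * Real.log (∑ k, c k * Real.exp (y k)) := by
  have pos : ∀ t : κ → ℝ, 0 < ∑ k, c k * Real.exp (t k) := by
    intro t
    obtain ⟨k, hk⟩ := hpos
    exact Finset.sum_pos' (fun i _ => mul_nonneg (hc i) (Real.exp_pos _).le)
      ⟨k, Finset.mem_univ _, mul_pos hk (Real.exp_pos _)⟩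
  have norm : ∀ t : κ → ℝ,
      ∑ k, c k * Real.exp (t k - Real.log (∑ k, c k * Real.exp (t k))) = 1 := by
    intro t
    simp_rw [Real.exp_sub, Real.exp_log (pos t), ← mul_div_assoc]
    rw [← Finset.sum_div, div_self (pos t).ne']
  set S := Real.log (∑ k, c k * Real.exp (x k)) with hS
  set T := Real.log (∑ k, c k * Real.exp (y k)) with hT
  rw [Real.log_le_iff_le_exp (pos _)]
  have key : ∑ k, c k * Real.exp (a * (x k - S) + b * (y k - T)) ≤ 1 := by
    calc _ ≤ ∑ k, (a * (c k * Real.exp (x k - S)) + b * (c k * Real.exp (y k - T))) := by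
          refine Finset.sum_le_sum fun k _ => ?_
          have := convexOn_exp.2 (Set.mem_univ (x k - S)) (Set.mem_univ (y k - T)) ha hb hab
          simp only [smul_eq_mul] at this
          nlinarith [mul_le_mul_of_nonneg_left this (hc k)]
      _ = 1 := by
          rw [Finset.sum_add_distrib, ← Finset.mul_sum, ← Finset.mul_sum, norm x, norm y]
          linarith
  have : ∑ k, c k * Real.exp (a * x k + b * y k) =
      Real.exp (a * S + b * T) * ∑ k, c k * Real.exp (a * (x k - S) + b * (y k - T)) := by
    rw [Finset.mul_sum]
    refine Finset.sum_congr rfl fun k _ => ?_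
    rw [mul_left_comm, ← Real.exp_add]
    ring_nf
  rw [this]
  exact mul_le_of_le_one_right (Real.exp_pos _).le key

theorem logdet_convex (M N : ℕ) (H : Matrix (Fin M) (Fin N) ℂ) :
    ConvexOn ℝ Set.univ (fun p : (Fin N → ℝ) × ℝ =>
      Real.log (((Real.exp p.2 : ℂ) • (1 : Matrix (Fin M) (Fin M) ℂ) +
          H * Matrix.diagonal (fun n => (Real.exp (p.1 n) : ℂ)) * Hᴴ).det.re)) := by
  let A : Matrix (Fin M) (Fin N ⊕ Fin M) ℂ := Matrix.fromCols H 1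
  let v : (Fin N → ℝ) × ℝ → Fin N ⊕ Fin M → ℝ := fun p => Sum.elim p.1 (fun _ => p.2)
  let c : (Fin M → Fin N ⊕ Fin M) → ℝ := fun f =>
    (M.factorial : ℝ)⁻¹ * Complex.normSq (A.submatrix id f).det
  have hM : (M.factorial : ℝ) ≠ 0 := by exact_mod_cast M.factorial_ne_zero
  have hdet : ∀ p : (Fin N → ℝ) × ℝ,
      (((Real.exp p.2 : ℂ) • (1 : Matrix (Fin M) (Fin M) ℂ) +
          H * Matrix.diagonal (fun n => (Real.exp (p.1 n) : ℂ)) * Hᴴ).det.re) =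
        ∑ f, c f * Real.exp (∑ i, v p (f i)) := by
    intro p
    have hm : (Real.exp p.2 : ℂ) • (1 : Matrix (Fin M) (Fin M) ℂ) +
          H * Matrix.diagonal (fun n => (Real.exp (p.1 n) : ℂ)) * Hᴴ =
        A * Matrix.diagonal (fun k => (Real.exp (v p k) : ℂ)) * Aᴴ := by
      ext i j
      simp [A, v, Matrix.mul_apply, Matrix.diagonal_apply, Matrix.one_apply]
      rw [add_comm]
    have h := cb_expand M A (fun k => (Real.exp (v p k) : ℂ))
    rw [← hm] at h
    have h' := congrArg Complex.re h
    have hr : ∀ f : Fin M → Fin N ⊕ Fin M,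
        ((∏ i, (Real.exp (v p (f i)) : ℂ)) *
          ((A.submatrix id f).det * star (A.submatrix id f).det)) =
        ((Real.exp (∑ i, v p (f i)) * Complex.normSq (A.submatrix id f).det : ℝ) : ℂ) := by
      intro f
      rw [Real.exp_sum]
      have := Complex.mul_conj (A.submatrix id f).det
      push_cast
      rw [← this]
      rfl
    rw [Finset.sum_congr rfl (fun f _ => hr f), ← Complex.ofReal_sum, Complex.ofReal_re,
      ← Complex.ofReal_natCast, Complex.re_ofReal_mul] at h'
    rw [← mul_right_inj' hM, h', Finset.mul_sum]
    refine Finset.sum_congr rfl fun f _ => ?_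
    simp only [c]
    field_simp
  simp_rw [hdet]
  refine ⟨convex_univ, fun p _ q _ a b ha hb hab => ?_⟩
  have hlin : ∀ f : Fin M → Fin N ⊕ Fin M, ∑ i, v (a • p + b • q) (f i) =
      a * ∑ i, v p (f i) + b * ∑ i, v q (f i) := by
    intro f
    rw [Finset.mul_sum, Finset.mul_sum, ← Finset.sum_add_distrib]
    refine Finset.sum_congr rfl fun i _ => ?_
    rcases f i with k | k <;> simp [v]
  simp_rw [hlin, smul_eq_mul]
  refine lse_ineq c _ _ (fun f => mul_nonneg (by positivity) (Complex.normSq_nonneg _)) ⟨Sum.inr, ?_⟩ a b ha hb hab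
  have : A.submatrix id Sum.inr = 1 := by
    ext i j; simp [A]
  simp only [c, this]
  simp [Nat.factorial_pos]

/-- **Convexity of the MM surrogate (6).** For `c ≥ 0`, nonnegative weights `w`,
`τ ≥ 0` and `a₀, b₀ > 0`, the function
`(z, β) ↦ L log det(e^β I + H diag(e^z) Hᴴ) + c e^{-β} + ∑ₙ wₙ e^{-zₙ}
  + ∑ₙ ((a₀+1) zₙ + b₀ e^{-zₙ}) + (a₀+1) β + b₀ e^{-β} + τ ‖D z‖₁`
is convex on `ℝ^N × ℝ`. -/
theorem surrogate_convex (M N L : ℕ) (hL : 0 < L)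
    (H : Matrix (Fin M) (Fin N) ℂ)
    (c : ℝ) (hc : 0 ≤ c) (w : Fin N → ℝ) (hw : ∀ n, 0 ≤ w n)
    (τ : ℝ) (hτ : 0 ≤ τ) (a0 b0 : ℝ) (ha0 : 0 < a0) (hb0 : 0 < b0) :
    ConvexOn ℝ Set.univ (fun p : (Fin N → ℝ) × ℝ =>
      L * Real.log (((Real.exp p.2 : ℂ) • (1 : Matrix (Fin M) (Fin M) ℂ) +
          H * Matrix.diagonal (fun n => (Real.exp (p.1 n) : ℂ)) * Hᴴ).det.re) +
        c * Real.exp (-p.2) + (∑ n, w n * Real.exp (-(p.1 n))) +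
        (∑ n, ((a0 + 1) * p.1 n + b0 * Real.exp (-(p.1 n)))) +
        (a0 + 1) * p.2 + b0 * Real.exp (-p.2) + τ * tvNorm p.1) := by
  have hlinc : ∀ (l : (Fin N → ℝ) × ℝ →ₗ[ℝ] ℝ), ConvexOn ℝ Set.univ (fun p => l p) :=
    fun l => l.convexOn convex_univ
  have hexp : ∀ (l : (Fin N → ℝ) × ℝ →ₗ[ℝ] ℝ),
      ConvexOn ℝ Set.univ (fun p => Real.exp (-(l p))) :=
    fun l => convexOn_exp.comp_linearMap (-l)
  have habs : ∀ (l : (Fin N → ℝ) × ℝ →ₗ[ℝ] ℝ), ConvexOn ℝ Set.univ (fun p => |l p|) :=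
    fun l => (convexOn_norm (E := ℝ) convex_univ).comp_linearMap l
  have hsum : ∀ (K : ℕ) (g : Fin K → (Fin N → ℝ) × ℝ → ℝ),
      (∀ k, ConvexOn ℝ Set.univ (g k)) → ConvexOn ℝ Set.univ (fun p => ∑ k, g k p) := by
    intro K g hg
    refine ⟨convex_univ, fun p hp q hq a b ha hb hab => ?_⟩
    simp only [smul_eq_mul]
    rw [Finset.mul_sum, Finset.mul_sum, ← Finset.sum_add_distrib]
    exact Finset.sum_le_sum fun k _ => (hg k).2 hp hq ha hb hab
  let pr : Fin N → (Fin N → ℝ) × ℝ →ₗ[ℝ] ℝ := fun n =>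
    (LinearMap.proj n).comp (LinearMap.fst ℝ _ _)
  let sn : (Fin N → ℝ) × ℝ →ₗ[ℝ] ℝ := LinearMap.snd ℝ _ _
  have ha1 : 0 ≤ a0 + 1 := by linarith
  refine ((((((ConvexOn.add ?_ ?_).add ?_).add ?_).add ?_).add ?_).add ?_)
  · exact (logdet_convex M N H).smul (Nat.cast_nonneg L)
  · exact (hexp sn).smul hc
  · exact hsum N _ fun n => (hexp (pr n)).smul (hw n)
  · exact hsum N _ fun n => ((hlinc (pr n)).smul ha1).add ((hexp (pr n)).smul hb0.le)
  · exact (hlinc sn).smul ha1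
  · exact (hexp sn).smul hb0.le
  · refine ConvexOn.smul hτ ?_
    exact hsum (N - 1) _ fun i => habs (pr ⟨i.val + 1, by have := i.isLt; omega⟩ -
      pr ⟨i.val, by have := i.isLt; omega⟩)
end
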